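/- arXiv:1902.03299 — 2 statements merged into one kernel-verified Lean document; each statement's English description precedes it below -/
import Mathlib

section
/- Let X be a real vector space and let S be a nonempty convex subset of X with cor(S) ≠ ∅. Then the complement of the algebraic interior of S equals the algebraic closure of the complement of S: X \ cor(S) = lin(X \ S). -/
/-!
A core point `xb` lies in `S`, and in every direction a short segment from `xb` stays in `S`; hence
`xb` is neither in the complement nor linearly accessible from it. Conversely, fix a core
point `c` and let `xb ∈ S` lie outside the core. The ray from `xb` pointing away from `c`
leaves `S` at once: if it met `S` in a point `p` beyond `xb`, then `xb` would be a proper convex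
combination of `c` and `p`, hence a core point by `combo_mem_algCor`.
-/

/-- The algebraic interior (core) of a set `S` in a real vector space. -/
def algCor {X : Type*} [AddCommGroup X] [Module ℝ X] (S : Set X) : Set X :=
  {x | ∀ y : X, ∃ lb : ℝ, 0 < lb ∧ ∀ lam : ℝ, lam ∈ Set.Icc (0 : ℝ) lb → x + lam • y ∈ S}

/-- The algebraic closure (lin) of a set `S` in a real vector space: `S` together with
all points linearly accessible from `S`. -/
def algLin {X : Type*} [AddCommGroup X] [Module ℝ X] (S : Set X) : Set X :=
  S ∪ {xb | ∃ x ∈ S, x ≠ xb ∧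
    ∀ lam : ℝ, lam ∈ Set.Ioc (0 : ℝ) 1 → lam • x + (1 - lam) • xb ∈ S}

/-- A convex combination of a core point (with positive weight) and a point of a convex set is a
core point: the admissible step at the core point is scaled by its weight. -/
theorem combo_mem_algCor {X : Type*} [AddCommGroup X] [Module ℝ X] {S : Set X}
    (hconv : Convex ℝ S) {c p : X} (hc : c ∈ algCor S) (hp : p ∈ S) {a b : ℝ}
    (ha : 0 < a) (hb : 0 ≤ b) (hab : a + b = 1) : a • c + b • p ∈ algCor S := by
  intro y
  obtain ⟨r, hr, h⟩ := hc y
  refine ⟨a * r, by positivity, fun t ht => ?_⟩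
  have h1 : c + (t / a) • y ∈ S :=
    h _ ⟨div_nonneg ht.1 ha.le, by rw [div_le_iff₀ ha]; linarith [ht.2]⟩
  have h2 := hconv h1 hp ha.le hb hab
  rw [smul_add, smul_smul, mul_div_cancel₀ t ha.ne'] at h2
  convert h2 using 1
  abel

theorem stmt5 {X : Type*} [AddCommGroup X] [Module ℝ X]
    (S : Set X) (hS : S.Nonempty) (hconv : Convex ℝ S)
    (hcor : (algCor S).Nonempty) :
    (algCor S)ᶜ = algLin Sᶜ := by
  ext xb
  constructor
  · intro hx
    by_cases hxS : xb ∈ S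
    swap
    · exact Or.inl hxS
    obtain ⟨c, hc⟩ := hcor
    have hne : c ≠ xb := fun h => hx (h ▸ hc)
    have key : ∀ t : ℝ, 0 < t → xb + t • (xb - c) ∉ S := by
      intro t ht hmem
      apply hx
      have ht1 : (1 + t) ≠ 0 := by positivity
      have h := combo_mem_algCor hconv hc hmem (a := t / (1 + t)) (b := 1 / (1 + t))
        (by positivity) (by positivity) (by field_simp; ring)
      convert h using 1
      match_scalars <;> field_simp
      ring
    -- The reflection of `c` through `xb` witnesses accessibility.
    refine Or.inr ⟨xb + (1 : ℝ) • (xb - c), key 1 one_pos, ?_, fun t ht => ?_⟩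
    · intro h
      rw [one_smul, add_eq_left, sub_eq_zero] at h
      exact hne h.symm
    · have h := key t ht.1
      have e : t • (xb + (1 : ℝ) • (xb - c)) + (1 - t) • xb = xb + t • (xb - c) := by
        module
      rw [e]
      exact h
  · rintro (hx | ⟨x, -, -, h⟩) hc
    · obtain ⟨r, hr, h⟩ := hc 0
      exact hx (by simpa using h 0 ⟨le_rfl, hr.le⟩)
    · obtain ⟨r, hr, h'⟩ := hc (x - xb)
      refine h (min r 1) ⟨lt_min hr one_pos, min_le_right _ _⟩ ?_
      have h2 := h' (min r 1) ⟨(lt_min hr one_pos).le, min_le_left _ _⟩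
      convert h2 using 1
      module
end

section
/- Let X be a real vector space and let A be a nonempty convex subset of X with cor(A) ≠ ∅. Then lin(cor(lin(A))) = lin(A). -/
/-- The condition `x ≠ xb` in the definition of `algLin` becomes superfluous once the points of `S`
are described as being accessible from themselves. -/
lemma mem_algLin_iff {X : Type*} [AddCommGroup X] [Module ℝ X] {S : Set X} {z : X} :
    z ∈ algLin S ↔
      ∃ s ∈ S, ∀ lam : ℝ, lam ∈ Set.Ioc (0 : ℝ) 1 → lam • s + (1 - lam) • z ∈ S := by
  constructor
  · rintro (hz | ⟨s, hs, -, h⟩)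
    · refine ⟨z, hz, fun lam _ => ?_⟩
      rwa [← add_smul, add_sub_cancel, one_smul]
    · exact ⟨s, hs, h⟩
  · rintro ⟨s, hs, h⟩
    by_cases hsz : s = z
    · exact Or.inl (hsz ▸ hs)
    · exact Or.inr ⟨s, hs, hsz, h⟩

lemma algCor_subset {X : Type*} [AddCommGroup X] [Module ℝ X] (S : Set X) : algCor S ⊆ S := by
  intro x hx
  obtain ⟨lb, hlb, h⟩ := hx 0
  simpa using h 0 ⟨le_rfl, hlb.le⟩

lemma algCor_mono {X : Type*} [AddCommGroup X] [Module ℝ X] {S T : Set X} (h : S ⊆ T) :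
    algCor S ⊆ algCor T := by
  intro x hx y
  obtain ⟨lb, hlb, hy⟩ := hx y
  exact ⟨lb, hlb, fun lam hlam => h (hy lam hlam)⟩

lemma algLin_mono {X : Type*} [AddCommGroup X] [Module ℝ X] {S T : Set X} (h : S ⊆ T) :
    algLin S ⊆ algLin T := by
  intro z hz
  obtain ⟨s, hs, hl⟩ := mem_algLin_iff.1 hz
  exact mem_algLin_iff.2 ⟨s, h hs, fun lam hlam => h (hl lam hlam)⟩

lemma convex_algLin {X : Type*} [AddCommGroup X] [Module ℝ X] {S : Set X} (hS : Convex ℝ S) :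
    Convex ℝ (algLin S) := by
  intro z₁ h₁ z₂ h₂ a b ha hb hab
  obtain ⟨s₁, hs₁, hl₁⟩ := mem_algLin_iff.1 h₁
  obtain ⟨s₂, hs₂, hl₂⟩ := mem_algLin_iff.1 h₂
  refine mem_algLin_iff.2 ⟨a • s₁ + b • s₂, hS hs₁ hs₂ ha hb hab, fun lam hlam => ?_⟩
  convert hS (hl₁ lam hlam) (hl₂ lam hlam) ha hb hab using 1
  module

/-- Line segment principle: the half-open segment from a core point `x₀` of a convex set to a point
`z` of its algebraic closure consists of core points. -/
lemma segment_mem_algCor {X : Type*} [AddCommGroup X] [Module ℝ X] {S : Set X}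
    (hS : Convex ℝ S) {x₀ z : X} (hx : x₀ ∈ algCor S) (hz : z ∈ algLin S)
    {t : ℝ} (ht : t ∈ Set.Ioc (0 : ℝ) 1) : t • x₀ + (1 - t) • z ∈ algCor S := by
  obtain ⟨ht0, ht1⟩ := ht
  obtain ⟨s, -, hl⟩ := mem_algLin_iff.1 hz
  intro y
  obtain ⟨α, hα, hα'⟩ := hx (z - s)
  obtain ⟨β, hβ, hβ'⟩ := hx y
  refine ⟨t * β / 2, by positivity, fun μ hμ => ?_⟩
  -- `z` is replaced by `lam • s + (1 - lam) • z ∈ S`; the error `(1 - t) * lam • (z - s)` and the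
  -- perturbation `μ • y` are absorbed in `x₀`, each using half of the room available there.
  obtain ⟨lam, hlam0, hlam1, hlamα⟩ : ∃ lam : ℝ, 0 < lam ∧ lam ≤ 1 ∧ lam ≤ t * α / 2 :=
    ⟨min 1 (t * α / 2), by positivity, min_le_left _ _, min_le_right _ _⟩
  have hu : x₀ + (2 * ((1 - t) * lam / t)) • (z - s) ∈ S := by
    refine hα' _ ⟨?_, ?_⟩
    · have : 0 ≤ 1 - t := by linarith
      positivity
    · rw [← mul_div_assoc, div_le_iff₀ ht0]
      nlinarith
  have hv : x₀ + (2 * (μ / t)) • y ∈ S := by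
    refine hβ' _ ⟨?_, ?_⟩
    · have := hμ.1
      positivity
    · rw [← mul_div_assoc, div_le_iff₀ ht0]
      linarith [hμ.2]
  have hw := hS hu hv (a := 1 / 2) (b := 1 / 2) (by norm_num) (by norm_num) (by norm_num)
  convert hS hw (hl lam ⟨hlam0, hlam1⟩) ht0.le (sub_nonneg.2 ht1) (by ring) using 1
  match_scalars <;> field_simp <;> ring

/-- Passing to the algebraic closure adds no core points, provided there is one to begin with. -/
lemma algCor_algLin_subset {X : Type*} [AddCommGroup X] [Module ℝ X] {S : Set X}
    (hS : Convex ℝ S) (hne : (algCor S).Nonempty) : algCor (algLin S) ⊆ algCor S := by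
  obtain ⟨x₀, hx⟩ := hne
  intro p hp
  obtain ⟨μ, hμ, h⟩ := hp (p - x₀)
  -- `p` lies strictly between `x₀` and `p + μ • (p - x₀) ∈ lin S`.
  convert segment_mem_algCor hS hx (h μ ⟨hμ.le, le_rfl⟩) (t := μ / (1 + μ))
    ⟨by positivity, by rw [div_le_one (by positivity)]; linarith⟩ using 1
  match_scalars <;> field_simp <;> ring

theorem stmt9 {X : Type*} [AddCommGroup X] [Module ℝ X]
    (A : Set X) (hA : A.Nonempty) (hconv : Convex ℝ A)
    (hcor : (algCor A).Nonempty) :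
    algLin (algCor (algLin A)) = algLin A := by
  have hsub := algCor_algLin_subset hconv hcor
  obtain ⟨x₀, hx⟩ := hcor
  have hmono : algCor A ⊆ algCor (algLin A) := algCor_mono Set.subset_union_left
  apply Set.Subset.antisymm
  · intro z hz
    have hz' := algLin_mono (algCor_subset (algLin A)) hz
    exact mem_algLin_iff.2 ⟨x₀, algCor_subset A hx, fun t ht =>
      algCor_subset A (hsub (segment_mem_algCor (convex_algLin hconv) (hmono hx) hz' ht))⟩
  · intro z hz
    exact mem_algLin_iff.2 ⟨x₀, hmono hx, fun t ht =>
      hmono (segment_mem_algCor hconv hx hz ht)⟩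
end
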